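/- Let ε ≥ 0 and α > 0, and let u be a positive smooth function on ℝⁿ such that for some c > 0 one has c^{−1}(1+|x|²)^{(2m−n)/2} ≤ u(x) ≤ c(1+|x|²)^{(2m−n)/2} for all x, and u(x) = γ ∫_{ℝⁿ} |x−y|^{2m−n} F_{ε,u}(y) dy for all x ∈ ℝⁿ. Then both of the integrals ∫_{ℝⁿ} f(x)^{(n+2m)/2} u(x) dx and ∫_{ℝⁿ} f(x)^{n + α(n−2m)/2} u(x)^{−α} dx are finite and positive, and (1−ε) ∫_{ℝⁿ} f(x)^{(n+2m)/2} u(x) dx = ∫_{ℝⁿ} f(x)^{n + α(n−2m)/2} u(x)^{−α} dx; in particular ε < 1. -/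

import Mathlib

open MeasureTheory

/-- The nonlinearity `F_{ε,u}(x) := ε f(x)^{2m} u(x) +
f(x)^{(n+2m)/2 + α(n−2m)/2} u(x)^{−α}` with `f(x) = 2/(1+|x|²)`. -/
noncomputable def sphF (n m : ℕ) (ε α : ℝ) (u : EuclideanSpace ℝ (Fin n) → ℝ)
    (x : EuclideanSpace ℝ (Fin n)) : ℝ :=
  ε * (2 / (1 + ‖x‖ ^ 2)) ^ (2 * m) * u x +
    (2 / (1 + ‖x‖ ^ 2)) ^ (((n : ℝ) + 2 * m) / 2 + α * ((n : ℝ) - 2 * m) / 2) * u x ^ (-α)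

/-- Integrating the equation: for a positive smooth solution `u` of
`u(x) = γ ∫ |x−y|^{2m−n} F_{ε,u}(y) dy` with growth `u ≍ (1+|x|²)^{(2m−n)/2}`, the
integrals `∫ f^{(n+2m)/2} u` and `∫ f^{n+α(n−2m)/2} u^{−α}` are finite and positive,
`(1−ε) ∫ f^{(n+2m)/2} u = ∫ f^{n+α(n−2m)/2} u^{−α}`, and in particular `ε < 1`. -/
theorem stmt15 (n m : ℕ) (hn : 3 ≤ n) (hodd : Odd n) (hmn : n < 2 * m)
    (ε : ℝ) (hε : 0 ≤ ε) (α : ℝ) (hα : 0 < α)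
    (γ : ℝ) (hγ : 0 < γ)
    (hγeq : ∀ x : EuclideanSpace ℝ (Fin n),
      ((1 + ‖x‖ ^ 2) / 2) ^ ((2 * (m : ℝ) - n) / 2) =
        γ * ∫ y, ‖x - y‖ ^ (2 * m - n) * (2 / (1 + ‖y‖ ^ 2)) ^ (((n : ℝ) + 2 * m) / 2))
    (u : EuclideanSpace ℝ (Fin n) → ℝ) (husm : ContDiff ℝ (⊤ : ℕ∞) u)
    (hupos : ∀ x, 0 < u x)
    (hbound : ∃ c : ℝ, 0 < c ∧ ∀ x,
      c⁻¹ * (1 + ‖x‖ ^ 2) ^ ((2 * (m : ℝ) - n) / 2) ≤ u x ∧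
        u x ≤ c * (1 + ‖x‖ ^ 2) ^ ((2 * (m : ℝ) - n) / 2))
    (hueq : ∀ x, u x = γ * ∫ y, ‖x - y‖ ^ (2 * m - n) * sphF n m ε α u y) :
    Integrable (fun x : EuclideanSpace ℝ (Fin n) =>
      (2 / (1 + ‖x‖ ^ 2)) ^ (((n : ℝ) + 2 * m) / 2) * u x) ∧
    0 < (∫ x : EuclideanSpace ℝ (Fin n),
      (2 / (1 + ‖x‖ ^ 2)) ^ (((n : ℝ) + 2 * m) / 2) * u x) ∧
    Integrable (fun x : EuclideanSpace ℝ (Fin n) =>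
      (2 / (1 + ‖x‖ ^ 2)) ^ ((n : ℝ) + α * ((n : ℝ) - 2 * m) / 2) * u x ^ (-α)) ∧
    0 < (∫ x : EuclideanSpace ℝ (Fin n),
      (2 / (1 + ‖x‖ ^ 2)) ^ ((n : ℝ) + α * ((n : ℝ) - 2 * m) / 2) * u x ^ (-α)) ∧
    (1 - ε) * (∫ x : EuclideanSpace ℝ (Fin n),
        (2 / (1 + ‖x‖ ^ 2)) ^ (((n : ℝ) + 2 * m) / 2) * u x) =
      (∫ x : EuclideanSpace ℝ (Fin n),
        (2 / (1 + ‖x‖ ^ 2)) ^ ((n : ℝ) + α * ((n : ℝ) - 2 * m) / 2) * u x ^ (-α)) ∧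
    ε < 1 := by
  classical
  obtain ⟨c, hc, hb⟩ := hbound
  have hp : ∀ x : EuclideanSpace ℝ (Fin n), 0 < 1 + ‖x‖ ^ 2 := fun x => by positivity
  have hf : ∀ x : EuclideanSpace ℝ (Fin n), 0 < 2 / (1 + ‖x‖ ^ 2) := fun x => by positivity
  have hucont : Continuous u := husm.continuous
  have hfcont : Continuous (fun x : EuclideanSpace ℝ (Fin n) => 2 / (1 + ‖x‖ ^ 2)) :=
    continuous_const.div (by fun_prop) (fun x => (hp x).ne')
  have hfr : ∀ r : ℝ, Continuous
      (fun x : EuclideanSpace ℝ (Fin n) => (2 / (1 + ‖x‖ ^ 2)) ^ r) := fun r =>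
    hfcont.rpow_const (fun x => Or.inl (hf x).ne')
  have hua : Continuous (fun x => u x ^ (-α)) :=
    hucont.rpow_const (fun x => Or.inl (hupos x).ne')
  have hbase : Integrable (fun x : EuclideanSpace ℝ (Fin n) => (1 + ‖x‖ ^ 2) ^ (-(n : ℝ))) := by
    have h := integrable_rpow_neg_one_add_norm_sq
      (E := EuclideanSpace ℝ (Fin n)) (μ := volume) (r := 2 * (n : ℝ)) (by
        have : (3 : ℝ) ≤ n := by exact_mod_cast hn
        simp only [finrank_euclideanSpace, Fintype.card_fin]
        linarith)
    refine h.congr (Filter.Eventually.of_forall fun x => ?_)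
    simp only
    congr 1
    ring
  have hI1 : Integrable (fun x : EuclideanSpace ℝ (Fin n) =>
      (2 / (1 + ‖x‖ ^ 2)) ^ (((n : ℝ) + 2 * m) / 2) * u x) := by
    refine (hbase.const_mul ((2 : ℝ) ^ (((n : ℝ) + 2 * m) / 2) * c)).mono'
      ((hfr _).mul hucont).aestronglyMeasurable (Filter.Eventually.of_forall fun x => ?_)
    rw [Real.norm_of_nonneg (mul_nonneg (Real.rpow_nonneg (hf x).le _) (hupos x).le)]
    calc (2 / (1 + ‖x‖ ^ 2)) ^ (((n : ℝ) + 2 * m) / 2) * u x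
        ≤ (2 / (1 + ‖x‖ ^ 2)) ^ (((n : ℝ) + 2 * m) / 2) *
          (c * (1 + ‖x‖ ^ 2) ^ ((2 * (m : ℝ) - n) / 2)) :=
          mul_le_mul_of_nonneg_left (hb x).2 (Real.rpow_nonneg (hf x).le _)
      _ = _ := by
          rw [Real.div_rpow (by norm_num) (hp x).le, div_eq_mul_inv, ← Real.rpow_neg (hp x).le]
          have : (1 + ‖x‖ ^ 2) ^ (-(n : ℝ)) = (1 + ‖x‖ ^ 2) ^ (-(((n : ℝ) + 2 * m) / 2)) *
              (1 + ‖x‖ ^ 2) ^ ((2 * (m : ℝ) - n) / 2) := by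
            rw [← Real.rpow_add (hp x)]; congr 1; ring
          rw [this]; ring
  have hI2 : Integrable (fun x : EuclideanSpace ℝ (Fin n) =>
      (2 / (1 + ‖x‖ ^ 2)) ^ ((n : ℝ) + α * ((n : ℝ) - 2 * m) / 2) * u x ^ (-α)) := by
    refine (hbase.const_mul ((2 : ℝ) ^ ((n : ℝ) + α * ((n : ℝ) - 2 * m) / 2) *
      (c⁻¹) ^ (-α))).mono'
      ((hfr _).mul hua).aestronglyMeasurable (Filter.Eventually.of_forall fun x => ?_)
    rw [Real.norm_of_nonneg (mul_nonneg (Real.rpow_nonneg (hf x).le _)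
      (Real.rpow_nonneg (hupos x).le _))]
    have hq : 0 < c⁻¹ * (1 + ‖x‖ ^ 2) ^ ((2 * (m : ℝ) - n) / 2) :=
      mul_pos (inv_pos.2 hc) (Real.rpow_pos_of_pos (hp x) _)
    calc (2 / (1 + ‖x‖ ^ 2)) ^ ((n : ℝ) + α * ((n : ℝ) - 2 * m) / 2) * u x ^ (-α)
        ≤ (2 / (1 + ‖x‖ ^ 2)) ^ ((n : ℝ) + α * ((n : ℝ) - 2 * m) / 2) *
          (c⁻¹ * (1 + ‖x‖ ^ 2) ^ ((2 * (m : ℝ) - n) / 2)) ^ (-α) :=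
          mul_le_mul_of_nonneg_left
            (Real.rpow_le_rpow_of_nonpos hq (hb x).1 (by linarith))
            (Real.rpow_nonneg (hf x).le _)
      _ = _ := by
          rw [Real.div_rpow (by norm_num) (hp x).le, div_eq_mul_inv, ← Real.rpow_neg (hp x).le,
            Real.mul_rpow (inv_pos.2 hc).le (Real.rpow_nonneg (hp x).le _),
            ← Real.rpow_mul (hp x).le]
          have : (1 + ‖x‖ ^ 2) ^ (-(n : ℝ)) =
              (1 + ‖x‖ ^ 2) ^ (-((n : ℝ) + α * ((n : ℝ) - 2 * m) / 2)) *
              (1 + ‖x‖ ^ 2) ^ ((2 * (m : ℝ) - n) / 2 * (-α)) := by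
            rw [← Real.rpow_add (hp x)]; congr 1; ring
          rw [this]; ring
  have hposint : ∀ g : EuclideanSpace ℝ (Fin n) → ℝ, (∀ x, 0 < g x) → Integrable g →
      0 < ∫ x, g x := by
    intro g hg hgi
    rw [integral_pos_iff_support_of_nonneg (fun x => (hg x).le) hgi]
    have : Function.support g = Set.univ := Set.eq_univ_of_forall fun x => (hg x).ne'
    rw [this]
    exact isOpen_univ.measure_pos _ Set.univ_nonempty
  have hA := hposint _ (fun x => mul_pos (Real.rpow_pos_of_pos (hf x) _) (hupos x)) hI1
  have hB := hposint _ (fun x => mul_pos (Real.rpow_pos_of_pos (hf x) _)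
    (Real.rpow_pos_of_pos (hupos x) _)) hI2
  have hFpos : ∀ x, 0 ≤ sphF n m ε α u x := fun x => by
    unfold sphF
    have h1 := hupos x
    have h2 := hf x
    positivity
  have hFcont : Continuous (sphF n m ε α u) := by
    unfold sphF
    exact ((continuous_const.mul (hfcont.pow _)).mul hucont).add ((hfr _).mul hua)
  -- the pointwise identity
  have hkey : ∀ y, sphF n m ε α u y * ((1 + ‖y‖ ^ 2) / 2) ^ ((2 * (m : ℝ) - n) / 2) =
      ε * ((2 / (1 + ‖y‖ ^ 2)) ^ (((n : ℝ) + 2 * m) / 2) * u y) +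
      (2 / (1 + ‖y‖ ^ 2)) ^ ((n : ℝ) + α * ((n : ℝ) - 2 * m) / 2) * u y ^ (-α) := by
    intro y
    have e1 : ((1 + ‖y‖ ^ 2) / 2) ^ ((2 * (m : ℝ) - n) / 2) =
        (2 / (1 + ‖y‖ ^ 2)) ^ (((n : ℝ) - 2 * m) / 2) := by
      rw [← inv_div, Real.inv_rpow (hf y).le, ← Real.rpow_neg (hf y).le]
      congr 1; ring
    have e2 : (2 / (1 + ‖y‖ ^ 2)) ^ (((n : ℝ) + 2 * m) / 2) =
        (2 / (1 + ‖y‖ ^ 2)) ^ (2 * m) * (2 / (1 + ‖y‖ ^ 2)) ^ (((n : ℝ) - 2 * m) / 2) := by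
      rw [← Real.rpow_natCast (2 / (1 + ‖y‖ ^ 2)) (2 * m), ← Real.rpow_add (hf y)]
      congr 1; push_cast; ring
    have e3 : (2 / (1 + ‖y‖ ^ 2)) ^ ((n : ℝ) + α * ((n : ℝ) - 2 * m) / 2) =
        (2 / (1 + ‖y‖ ^ 2)) ^ (((n : ℝ) + 2 * m) / 2 + α * ((n : ℝ) - 2 * m) / 2) *
        (2 / (1 + ‖y‖ ^ 2)) ^ (((n : ℝ) - 2 * m) / 2) := by
      rw [← Real.rpow_add (hf y)]
      congr 1; ring
    rw [e1, e2, e3]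
    unfold sphF
    ring
  -- kernel
  let H : EuclideanSpace ℝ (Fin n) → EuclideanSpace ℝ (Fin n) → ℝ := fun x y =>
    ‖y - x‖ ^ (2 * m - n) * (2 / (1 + ‖x‖ ^ 2)) ^ (((n : ℝ) + 2 * m) / 2) * sphF n m ε α u y
  have hHnn : ∀ x y, 0 ≤ H x y := fun x y =>
    mul_nonneg (mul_nonneg (by positivity) (Real.rpow_nonneg (hf x).le _)) (hFpos y)
  have hHcont : Continuous (Function.uncurry H) :=
    ((((continuous_snd.sub continuous_fst).norm).pow _).mul
      ((hfr _).comp continuous_fst)).mul (hFcont.comp continuous_snd)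
  have hGi : ∀ y : EuclideanSpace ℝ (Fin n), Integrable (fun x =>
      ‖y - x‖ ^ (2 * m - n) * (2 / (1 + ‖x‖ ^ 2)) ^ (((n : ℝ) + 2 * m) / 2)) := by
    intro y
    by_contra hni
    have h := hγeq y
    rw [integral_undef hni, mul_zero] at h
    exact (Real.rpow_pos_of_pos (half_pos (hp y)) _).ne' h
  have hin : ∀ y, ∫ x, H x y = γ⁻¹ *
      (sphF n m ε α u y * ((1 + ‖y‖ ^ 2) / 2) ^ ((2 * (m : ℝ) - n) / 2)) := by
    intro y
    simp only [H]
    rw [integral_mul_const, hγeq y]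
    field_simp
  have hin2 : ∀ x, ∫ y, H x y = γ⁻¹ *
      ((2 / (1 + ‖x‖ ^ 2)) ^ (((n : ℝ) + 2 * m) / 2) * u x) := by
    intro x
    have : ∀ y, H x y = (2 / (1 + ‖x‖ ^ 2)) ^ (((n : ℝ) + 2 * m) / 2) *
        (‖x - y‖ ^ (2 * m - n) * sphF n m ε α u y) := fun y => by
      simp only [H]; rw [norm_sub_rev]; ring
    simp only [this]
    rw [integral_const_mul, hueq x]
    field_simp
  have hHi : Integrable (Function.uncurry H) (volume.prod volume) := by
    rw [integrable_prod_iff' hHcont.aestronglyMeasurable]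
    refine ⟨Filter.Eventually.of_forall fun y => (hGi y).mul_const (sphF n m ε α u y), ?_⟩
    have : ∀ y, ∫ x, ‖Function.uncurry H (x, y)‖ = γ⁻¹ *
      (ε * ((2 / (1 + ‖y‖ ^ 2)) ^ (((n : ℝ) + 2 * m) / 2) * u y) +
      (2 / (1 + ‖y‖ ^ 2)) ^ ((n : ℝ) + α * ((n : ℝ) - 2 * m) / 2) * u y ^ (-α)) := by
      intro y
      rw [← hkey, ← hin]
      exact integral_congr_ae (Filter.Eventually.of_forall fun x =>
        Real.norm_of_nonneg (hHnn x y))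
    simp only [this]
    exact ((hI1.const_mul ε).add hI2).const_mul _
  have hswap := integral_integral_swap hHi
  simp only [hin, hin2, hkey] at hswap
  rw [integral_const_mul, integral_const_mul, integral_add (hI1.const_mul ε) hI2,
    integral_const_mul] at hswap
  have hfin := mul_left_cancel₀ (inv_pos.2 hγ).ne' hswap
  refine ⟨hI1, hA, hI2, hB, by linarith, ?_⟩
  by_contra hge
  push Not at hge
  nlinarith [mul_nonneg (sub_nonneg.2 hge) hA.le]
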